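/- Let D = (V, E; c; s, t) be a flow network in which every arc belongs to at least one s-t path, and suppose the associated flow game Γ_D is convex. Then every arc e ∈ E is essential, i.e., γ(E) − γ(E ∖ {e}) > 0, and moreover every feasible flow f on E whose value equals γ(E) (i.e., every maximum flow of D) satisfies f(e) > 0 for every arc e ∈ E. -/

import Mathlib

open scoped Classical
open Finset

noncomputable section

/-- The arcs (consecutive vertex pairs) of a vertex list. -/
def arcsOf {V : Type*} [DecidableEq V] (vs : List V) : Finset (V × V) :=
  (vs.zip vs.tail).toFinset

/-- `vs` is the vertex list of a directed path from `a` to `b` using arcs of `E`,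
with pairwise distinct vertices. -/
def IsPathList {V : Type*} (E : Finset (V × V)) (a b : V) (vs : List V) : Prop :=
  vs.Nodup ∧ vs.head? = some a ∧ vs.getLast? = some b ∧
    vs.Chain' (fun x y => (x, y) ∈ E)

/-- `P` is (the arc set of) an `s`-`t` path in the network with arc set `E`. -/
def IsSTPath {V : Type*} [DecidableEq V] (E : Finset (V × V)) (s t : V)
    (P : Finset (V × V)) : Prop :=
  ∃ vs : List V, IsPathList E s t vs ∧ P = arcsOf vs

/-- The capacity of a path (arc set): the minimum capacity of its arcs. -/
def pathCap {V : Type*} (c : V × V → ℝ) (P : Finset (V × V)) : ℝ :=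
  sInf (c '' (P : Set (V × V)))

/-- `e` is a bottleneck arc of some `s`-`t` path, i.e. `e ∈ B`. -/
def IsBottleneck {V : Type*} [DecidableEq V] (E : Finset (V × V)) (c : V × V → ℝ)
    (s t : V) (e : V × V) : Prop :=
  ∃ P : Finset (V × V), IsSTPath E s t P ∧ e ∈ P ∧ c e = pathCap c P

/-- The finite set `𝒫` of all `s`-`t` paths (as arc sets). -/
def stPaths {V : Type*} [DecidableEq V] (E : Finset (V × V)) (s t : V) :
    Finset (Finset (V × V)) :=
  E.powerset.filter (fun P => IsSTPath E s t P)

/-- The value of a flow `f`: net flow out of the source `s`. -/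
def flowValue {V : Type*} [DecidableEq V] (E : Finset (V × V)) (s : V)
    (f : V × V → ℝ) : ℝ :=
  ∑ e ∈ E.filter (fun e => e.1 = s), f e - ∑ e ∈ E.filter (fun e => e.2 = s), f e

/-- `f` is a feasible flow on the coalition `S`. -/
def IsFeasibleFlow {V : Type*} [DecidableEq V] (E : Finset (V × V)) (c : V × V → ℝ)
    (s t : V) (S : Finset (V × V)) (f : V × V → ℝ) : Prop :=
  (∀ e ∈ E, 0 ≤ f e ∧ f e ≤ c e) ∧
  (∀ e, e ∉ S → f e = 0) ∧
  (∀ v, v ≠ s → v ≠ t →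
    ∑ e ∈ E.filter (fun e => e.2 = v), f e = ∑ e ∈ E.filter (fun e => e.1 = v), f e)

/-- `γ` is the characteristic function of the flow game on `D = (V,E;c;s,t)`:
for each coalition `S ⊆ E`, `γ S` is the maximum value of a feasible flow on `S`. -/
def IsFlowGame {V : Type*} [DecidableEq V] (E : Finset (V × V)) (c : V × V → ℝ)
    (s t : V) (γ : Finset (V × V) → ℝ) : Prop :=
  ∀ S : Finset (V × V), S ⊆ E →
    IsGreatest {x : ℝ | ∃ f, IsFeasibleFlow E c s t S f ∧ flowValue E s f = x} (γ S)

/-- The cooperative game `γ` with player set `E` is convex (supermodular). -/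
def GameConvex {V : Type*} [DecidableEq V] (E : Finset (V × V))
    (γ : Finset (V × V) → ℝ) : Prop :=
  ∀ e ∈ E, ∀ S T : Finset (V × V), S ⊆ T → T ⊆ E.erase e →
    γ (insert e S) - γ S ≤ γ (insert e T) - γ T

/-- The directed graph with arc set `E` contains a directed cycle. -/
def HasDirectedCycle {V : Type*} (E : Finset (V × V)) : Prop :=
  ∃ (v : V) (vs : List V), (v :: vs).Nodup ∧
    (v :: vs).Chain' (fun x y => (x, y) ∈ E) ∧
    ((v :: vs).getLast (List.cons_ne_nil v vs), v) ∈ E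

/-!
Let `e` lie on an `s`-`t` path `P`. The coalition `P` earns at least the capacity of the path, by
sending that amount along it, while `P ∖ {e}` earns nothing, because the vertices of `P` up to the
tail of `e` form a cut that no arc of `P ∖ {e}` leaves. Hence the marginal contribution of `e` to
`P ∖ {e}` is at least the path capacity, and by convexity so is its contribution to `E ∖ {e}`.
A maximum flow avoiding `e` would be feasible on `E ∖ {e}`, contradicting this.
-/

section PathCapacity

variable {V : Type*} {c : V × V → ℝ} {P : Finset (V × V)}

theorem pathCap_le {e : V × V} (he : e ∈ P) : pathCap c P ≤ c e :=
  csInf_le (P.finite_toSet.image c).bddBelow (Set.mem_image_of_mem c he)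

theorem pathCap_pos (hP : P.Nonempty) (hc : ∀ e ∈ P, 0 < c e) : 0 < pathCap c P := by
  obtain ⟨e, he, heq⟩ := (hP.to_set.image c).csInf_mem (P.finite_toSet.image c)
  exact (hc e he).trans_eq heq

end PathCapacity

section Paths

variable {V : Type*} [DecidableEq V]

theorem arcsOf_singleton (a : V) : arcsOf [a] = ∅ := by
  simp [arcsOf]

theorem arcsOf_cons_cons (a b : V) (l : List V) :
    arcsOf (a :: b :: l) = insert (a, b) (arcsOf (b :: l)) := by
  simp [arcsOf]

theorem mem_arcsOf_iff_infix {l : List V} {e : V × V} :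
    e ∈ arcsOf l ↔ [e.1, e.2] <:+: l := by
  induction l with
  | nil => simp [arcsOf]
  | cons a l ih =>
    cases l with
    | nil => simp [arcsOf_singleton, List.infix_cons_iff]
    | cons b l =>
      rw [arcsOf_cons_cons, mem_insert, ih, List.infix_cons_iff (a := a)]
      simp [Prod.ext_iff]

theorem fst_mem_of_mem_arcsOf {l : List V} {e : V × V} (he : e ∈ arcsOf l) : e.1 ∈ l :=
  (mem_arcsOf_iff_infix.1 he).subset (by simp)

theorem snd_mem_of_mem_arcsOf {l : List V} {e : V × V} (he : e ∈ arcsOf l) : e.2 ∈ l :=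
  (mem_arcsOf_iff_infix.1 he).subset (by simp)

theorem mem_arcsOf_append_iff {l₁ l₂ : List V} {a b : V} {e : V × V} :
    e ∈ arcsOf (l₁ ++ [a] ++ b :: l₂) ↔
      e ∈ arcsOf (l₁ ++ [a]) ∨ e = (a, b) ∨ e ∈ arcsOf (b :: l₂) := by
  simp only [mem_arcsOf_iff_infix]
  constructor
  · rw [List.infix_append_iff_ne_nil]
    rintro (hbefore | hafter | ⟨m₁, m₂, hm₁, hm₂, heq, hsuffix, hprefix⟩)
    · exact .inl hbefore
    · exact .inr (.inr hafter)
    · obtain ⟨rfl, rfl⟩ : m₁ = [e.1] ∧ m₂ = [e.2] := by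
        simpa [List.cons_eq_append_iff, List.append_eq_cons_iff, hm₁, hm₂, eq_comm] using heq
      exact .inr (.inl (Prod.ext (by simpa using hsuffix) (by simpa using hprefix)))
  · rintro (hbefore | rfl | hafter)
    · exact List.infix_append_of_infix_left hbefore
    · exact ⟨l₁, l₂, by simp⟩
    · exact List.infix_append_of_infix_right hafter

theorem sum_arcsOf_sub {M : Type*} [AddCommGroup M] (g : V → M) {a b : V} {l : List V}
    (hl : (a :: l).Nodup) (hb : (a :: l).getLast? = some b) :
    ∑ e ∈ arcsOf (a :: l), (g e.1 - g e.2) = g a - g b := by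
  induction l generalizing a with
  | nil =>
    obtain rfl : a = b := by simpa using hb
    simp [arcsOf_singleton]
  | cons x l ih =>
    have ha : (a, x) ∉ arcsOf (x :: l) := fun h ↦ hl.notMem (fst_mem_of_mem_arcsOf h)
    rw [arcsOf_cons_cons, sum_insert ha, ih hl.of_cons (by rwa [List.getLast?_cons_cons] at hb)]
    exact sub_add_sub_cancel _ _ _

variable {E : Finset (V × V)} {s t : V} {P : Finset (V × V)}

theorem IsSTPath.subset (hP : IsSTPath E s t P) : P ⊆ E := by
  obtain ⟨vs, ⟨-, -, -, hchain⟩, rfl⟩ := hP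
  exact fun e he ↦ List.isChain_pair.1 (hchain.infix (mem_arcsOf_iff_infix.1 he))

theorem IsSTPath.sum_sub {M : Type*} [AddCommGroup M] (hP : IsSTPath E s t P) (g : V → M) :
    ∑ e ∈ P, (g e.1 - g e.2) = g s - g t := by
  obtain ⟨vs, ⟨hnodup, hs, ht, -⟩, rfl⟩ := hP
  obtain ⟨l, rfl⟩ := List.head?_eq_some_iff.1 hs
  exact sum_arcsOf_sub g hnodup ht

theorem IsSTPath.exists_cut (hP : IsSTPath E s t P) {e : V × V} (he : e ∈ P) :
    ∃ U : Finset V, s ∈ U ∧ t ∉ U ∧ ∀ e' ∈ P.erase e, e'.1 ∈ U → e'.2 ∈ U := by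
  obtain ⟨vs, ⟨hnodup, hs, ht, -⟩, rfl⟩ := hP
  obtain ⟨l₁, l₂, hvs⟩ := mem_arcsOf_iff_infix.1 he
  obtain rfl : l₁ ++ [e.1] ++ e.2 :: l₂ = vs := by simpa using hvs
  have hdisj : (l₁ ++ [e.1]).Disjoint (e.2 :: l₂) := List.disjoint_of_nodup_append hnodup
  refine ⟨(l₁ ++ [e.1]).toFinset, ?_, ?_, fun e' he' htail ↦ ?_⟩
  · exact List.mem_toFinset.2 (List.mem_of_head? (by simpa using hs))
  · rw [List.mem_toFinset]
    exact fun h ↦ hdisj h (List.mem_of_getLast? (by simpa using ht))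
  · rw [List.mem_toFinset] at htail ⊢
    obtain ⟨hne, he'⟩ := mem_erase.1 he'
    rcases mem_arcsOf_append_iff.1 he' with hbefore | heq | hafter
    · exact snd_mem_of_mem_arcsOf hbefore
    · exact absurd heq hne
    · exact absurd (fst_mem_of_mem_arcsOf hafter) (hdisj htail)

end Paths

section Flows

variable {V : Type*} [DecidableEq V] {E S : Finset (V × V)} {c f : V × V → ℝ} {s t : V}

theorem sum_flowValue (E : Finset (V × V)) (f : V × V → ℝ) (U : Finset V) :
    ∑ v ∈ U, flowValue E v f =
      ∑ e ∈ E with e.1 ∈ U ∧ e.2 ∉ U, f e - ∑ e ∈ E with e.1 ∉ U ∧ e.2 ∈ U, f e := by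
  simp only [flowValue, sum_sub_distrib, sum_fiberwise_eq_sum_filter]
  simp only [sum_filter, ← sum_sub_distrib]
  refine sum_congr rfl fun e _ ↦ ?_
  by_cases htail : e.1 ∈ U <;> by_cases hhead : e.2 ∈ U <;> simp [htail, hhead]

theorem IsFeasibleFlow.flowValue_eq_zero (hf : IsFeasibleFlow E c s t S f) {v : V}
    (hs : v ≠ s) (ht : v ≠ t) : flowValue E v f = 0 :=
  sub_eq_zero.2 (hf.2.2 v hs ht).symm

theorem IsFeasibleFlow.flowValue_eq_cut (hf : IsFeasibleFlow E c s t S f) {U : Finset V}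
    (hs : s ∈ U) (ht : t ∉ U) :
    flowValue E s f =
      ∑ e ∈ E with e.1 ∈ U ∧ e.2 ∉ U, f e - ∑ e ∈ E with e.1 ∉ U ∧ e.2 ∈ U, f e := by
  rw [← sum_flowValue]
  exact (sum_eq_single_of_mem s hs fun v hv hvs ↦
    hf.flowValue_eq_zero hvs (ne_of_mem_of_not_mem hv ht)).symm

theorem IsFeasibleFlow.flowValue_nonpos_of_cut (hf : IsFeasibleFlow E c s t S f) {U : Finset V}
    (hs : s ∈ U) (ht : t ∉ U) (hU : ∀ e ∈ S, e.1 ∈ U → e.2 ∈ U) : flowValue E s f ≤ 0 := by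
  have hout : ∑ e ∈ E with e.1 ∈ U ∧ e.2 ∉ U, f e = 0 := by
    refine sum_eq_zero fun e he ↦ hf.2.1 e fun heS ↦ ?_
    obtain ⟨-, htail, hhead⟩ := mem_filter.1 he
    exact hhead (hU e heS htail)
  have hin : 0 ≤ ∑ e ∈ E with e.1 ∉ U ∧ e.2 ∈ U, f e :=
    sum_nonneg fun e he ↦ (hf.1 e (mem_of_mem_filter e he)).1
  rw [hf.flowValue_eq_cut hs ht, hout, zero_sub]
  exact neg_nonpos.2 hin

theorem IsFeasibleFlow.erase (hf : IsFeasibleFlow E c s t S f) {e : V × V} (he : f e = 0) :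
    IsFeasibleFlow E c s t (S.erase e) f := by
  refine ⟨hf.1, fun e' he' ↦ ?_, hf.2.2⟩
  by_cases heq : e' = e
  · rw [heq, he]
  · exact hf.2.1 e' fun h ↦ he' (mem_erase.2 ⟨heq, h⟩)

end Flows

section UniformFlow

variable {V : Type*} [DecidableEq V]

/-- The arc function sending the amount `d` along every arc of `P` and nothing elsewhere; on an
`s`-`t` path this is the flow that routes `d` units from `s` to `t`. -/
def uniformFlow (P : Finset (V × V)) (d : ℝ) (e : V × V) : ℝ :=
  if e ∈ P then d else 0

variable {E P : Finset (V × V)} {c : V × V → ℝ} {s t : V} {d : ℝ}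

theorem flowValue_uniformFlow_eq_sum (hPE : P ⊆ E) (v : V) :
    flowValue E v (uniformFlow P d) =
      ∑ e ∈ P, ((if e.1 = v then d else 0) - (if e.2 = v then d else 0)) := by
  have hsum (p : V × V → Prop) [DecidablePred p] :
      ∑ e ∈ E with p e, uniformFlow P d e = ∑ e ∈ P, if p e then d else 0 := by
    simp only [uniformFlow, ← sum_filter]
    rw [filter_comm, filter_mem_eq_inter, inter_eq_right.2 hPE]
  rw [flowValue, hsum, hsum, sum_sub_distrib]

theorem IsSTPath.flowValue_uniformFlow (hP : IsSTPath E s t P) (v : V) :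
    flowValue E v (uniformFlow P d) = (if s = v then d else 0) - (if t = v then d else 0) := by
  rw [flowValue_uniformFlow_eq_sum hP.subset]
  exact hP.sum_sub fun x ↦ if x = v then d else 0

theorem IsSTPath.isFeasibleFlow_uniformFlow (hP : IsSTPath E s t P) (hc : ∀ e ∈ E, 0 ≤ c e)
    (hd : 0 ≤ d) (hdc : ∀ e ∈ P, d ≤ c e) : IsFeasibleFlow E c s t P (uniformFlow P d) := by
  refine ⟨fun e he ↦ ?_, fun e he ↦ if_neg he, fun v hs ht ↦ ?_⟩
  · by_cases heP : e ∈ P <;> simp [uniformFlow, heP, hd, hdc, hc e he]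
  · have hnet : flowValue E v (uniformFlow P d) = 0 := by
      simp [hP.flowValue_uniformFlow, hs.symm, ht.symm]
    exact (sub_eq_zero.1 hnet).symm

end UniformFlow

section FlowGames

variable {V : Type*} [DecidableEq V] {E S T P : Finset (V × V)} {c f : V × V → ℝ} {s t : V}
  {γ : Finset (V × V) → ℝ} {e : V × V}

theorem GameConvex.sub_erase_le_sub_erase (hconv : GameConvex E γ) (hST : S ⊆ T) (hTE : T ⊆ E)
    (he : e ∈ S) : γ S - γ (S.erase e) ≤ γ T - γ (T.erase e) := by
  have hmarginal := hconv e (hTE (hST he)) (S.erase e) (T.erase e)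
    (erase_subset_erase e hST) (erase_subset_erase e hTE)
  rwa [insert_erase he, insert_erase (hST he)] at hmarginal

theorem IsFlowGame.flowValue_le (hγ : IsFlowGame E c s t γ) (hSE : S ⊆ E)
    (hf : IsFeasibleFlow E c s t S f) : flowValue E s f ≤ γ S :=
  (hγ S hSE).2 ⟨f, hf, rfl⟩

theorem IsFlowGame.pathCap_le_apply (hγ : IsFlowGame E c s t γ) (hc : ∀ e ∈ E, 0 ≤ c e)
    (hP : IsSTPath E s t P) (hst : s ≠ t) : pathCap c P ≤ γ P := by
  have hcap : 0 ≤ pathCap c P :=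
    Real.sInf_nonneg (Set.forall_mem_image.2 fun e he ↦ hc e (hP.subset he))
  have hvalue : flowValue E s (uniformFlow P (pathCap c P)) = pathCap c P := by
    simp [hP.flowValue_uniformFlow, hst.symm]
  rw [← hvalue]
  exact hγ.flowValue_le hP.subset
    (hP.isFeasibleFlow_uniformFlow hc hcap fun _ ↦ pathCap_le)

theorem IsFlowGame.apply_nonpos_of_cut (hγ : IsFlowGame E c s t γ) (hSE : S ⊆ E) {U : Finset V}
    (hs : s ∈ U) (ht : t ∉ U) (hU : ∀ e ∈ S, e.1 ∈ U → e.2 ∈ U) : γ S ≤ 0 := by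
  obtain ⟨f, hf, hvalue⟩ := (hγ S hSE).1
  exact hvalue ▸ hf.flowValue_nonpos_of_cut hs ht hU

theorem IsFlowGame.pathCap_le_sub_erase (hγ : IsFlowGame E c s t γ) (hconv : GameConvex E γ)
    (hc : ∀ e ∈ E, 0 ≤ c e) (hP : IsSTPath E s t P) (he : e ∈ P) :
    pathCap c P ≤ γ E - γ (E.erase e) := by
  obtain ⟨U, hs, ht, hU⟩ := hP.exists_cut he
  have hwith : pathCap c P ≤ γ P := hγ.pathCap_le_apply hc hP (ne_of_mem_of_not_mem hs ht)
  have hwithout : γ (P.erase e) ≤ 0 :=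
    hγ.apply_nonpos_of_cut ((erase_subset e P).trans hP.subset) hs ht hU
  calc pathCap c P ≤ γ P - γ (P.erase e) := by linarith
    _ ≤ γ E - γ (E.erase e) := hconv.sub_erase_le_sub_erase hP.subset subset_rfl he

theorem IsFlowGame.flow_pos_of_erase_lt (hγ : IsFlowGame E c s t γ) (hSE : S ⊆ E)
    (he : e ∈ S) (hlt : γ (S.erase e) < γ S) (hf : IsFeasibleFlow E c s t S f)
    (hmax : flowValue E s f = γ S) : 0 < f e := by
  refine (hf.1 e (hSE he)).1.lt_of_ne' fun hzero ↦ hlt.not_ge ?_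
  rw [← hmax]
  exact hγ.flowValue_le ((erase_subset e S).trans hSE) (hf.erase hzero)

theorem arc_essentiality_general (hc : ∀ e ∈ E, 0 < c e) (hγ : IsFlowGame E c s t γ)
    (hconv : GameConvex E γ) (hP : IsSTPath E s t P) (he : e ∈ P) :
    0 < γ E - γ (E.erase e) ∧
      ∀ f : V × V → ℝ, IsFeasibleFlow E c s t E f → flowValue E s f = γ E → 0 < f e := by
  have hmarginal : 0 < γ E - γ (E.erase e) :=
    calc 0 < pathCap c P := pathCap_pos ⟨e, he⟩ fun e he ↦ hc e (hP.subset he)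
      _ ≤ γ E - γ (E.erase e) :=
        hγ.pathCap_le_sub_erase hconv (fun e he ↦ (hc e he).le) hP he
  exact ⟨hmarginal, fun f hf hmax ↦
    hγ.flow_pos_of_erase_lt subset_rfl (hP.subset he) (sub_pos.1 hmarginal) hf hmax⟩

end FlowGames

/-- Arc essentiality.  If every arc of the flow network lies on some
`s`-`t` path and the flow game is convex, then every arc is essential
(`γ(E) − γ(E \ {e}) > 0`) and carries strictly positive flow in every maximum flow. -/
theorem arc_essentiality
    {V : Type*} [Fintype V] [DecidableEq V]
    (E : Finset (V × V)) (c : V × V → ℝ) (s t : V) (γ : Finset (V × V) → ℝ)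
    (hst : s ≠ t) (hc : ∀ e ∈ E, 0 < c e)
    (hγ : IsFlowGame E c s t γ)
    (hcover : ∀ e ∈ E, ∃ P : Finset (V × V), IsSTPath E s t P ∧ e ∈ P)
    (hconv : GameConvex E γ) :
    (∀ e ∈ E, 0 < γ E - γ (E.erase e)) ∧
    (∀ f : V × V → ℝ, IsFeasibleFlow E c s t E f → flowValue E s f = γ E →
      ∀ e ∈ E, 0 < f e) := by
  choose P hP heP using hcover
  have essential e he := arc_essentiality_general hc hγ hconv (hP e he) (heP e he)
  exact ⟨fun e he ↦ (essential e he).1, fun f hf hmax e he ↦ (essential e he).2 f hf hmax⟩
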